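/- Let Ω ⊂ ℝ^d be a bounded open connected set, λ ∈ (0,1) and K > 1. Define F_K as the set of matrix fields F : cl(Ω) → ℝ^{d×d} such that ‖F(x)‖ ≤ K for all x ∈ cl(Ω), ‖F(x) − F(y)‖ ≤ K‖x − y‖^λ for all x, y ∈ cl(Ω), and det(F(x)) ≥ 1/K for all x ∈ cl(Ω). Then there exists a constant C(K) > 0 such that for every F ∈ F_K and every smooth compactly supported vector field v ∈ C_c^∞(Ω, ℝ^d): ∫_Ω |F(x)ᵀ∇v(x) + (∇v(x))ᵀF(x)|² dx ≥ C(K) · (∫_Ω |v(x)|² dx + ∫_Ω |∇v(x)|² dx). -/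

import Mathlib

open Set MeasureTheory Matrix
open scoped Matrix

/-- Frobenius norm of a real square matrix. -/
noncomputable def frobNorm {d : ℕ} (A : Matrix (Fin d) (Fin d) ℝ) : ℝ :=
  Real.sqrt (∑ i, ∑ j, (A i j) ^ 2)

/-- The Jacobian matrix of a map `v : ℝ^d → ℝ^d` at a point `x`, with entries
`(∇v(x))_{ij} = ∂_j v^i(x)`. -/
noncomputable def jacobianMatrix {d : ℕ}
    (v : EuclideanSpace ℝ (Fin d) → EuclideanSpace ℝ (Fin d))
    (x : EuclideanSpace ℝ (Fin d)) : Matrix (Fin d) (Fin d) ℝ :=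
  Matrix.of fun i j => fderiv ℝ v x (EuclideanSpace.single j 1) i

/-! Conjugating derivatives with the weight `e^φ`, `φ` linear, yields
`∫ e^{2φ} tr(∇u ∇u) = ∫ (∑ᵢ (∂ᵢ + φᵢ)(e^φ uᵢ))² ≥ 0`, since the conjugated derivatives commute and
the adjoint of `∂ᵢ + φᵢ` is `-(∂ᵢ - φᵢ)`. Hence Korn's inequality holds in `L²(e^{2φ})` with the
constant of the unweighted case, and applying it to `Aᵀu` covers a constant coefficient `A`. A
variable coefficient is frozen on small balls, where it oscillates little; averaging over all
translates of one cutoff turns the local estimates into a Gårding inequality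
`‖∇v‖² ≤ C ‖Fᵀ∇v + (∇v)ᵀF‖² + L ‖v‖²` in `L²(e^{2φ})`, with `C` and `L` independent of `φ`. By the
weighted Poincaré inequality `φ(e)² ‖v‖² ≤ ‖∇v‖²`, a steep `φ` absorbs the last term. -/

open scoped ContDiff Matrix.Norms.Frobenius Topology

theorem integrable_mul_norm_sq_of_continuousOn {X F : Type*} [TopologicalSpace X] [T2Space X]
    [MeasurableSpace X] [OpensMeasurableSpace X] {μ : Measure X} [IsFiniteMeasureOnCompacts μ]
    [NormedAddCommGroup F] {T : Set X} {w : X → ℝ} {f : X → F} (hT : IsCompact T)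
    (hw : ContinuousOn w T) (hf : ContinuousOn f T) (hfT : Function.support f ⊆ T) :
    Integrable (fun x ↦ w x * ‖f x‖ ^ 2) μ := by
  refine (integrableOn_iff_integrable_of_support_subset fun x hx ↦ hfT fun h ↦ hx ?_).1
    ((hw.mul (hf.norm.pow 2)).integrableOn_compact hT)
  simp [h]

theorem setIntegral_norm_sq_eq_integral {X F : Type*} [MeasurableSpace X] {μ : Measure X}
    [NormedAddCommGroup F] {f : X → F} {s : Set X} (hfs : Function.support f ⊆ s) :
    ∫ x in s, ‖f x‖ ^ 2 ∂μ = ∫ x, ‖f x‖ ^ 2 ∂μ := by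
  refine setIntegral_eq_integral_of_forall_compl_eq_zero fun x hx ↦ ?_
  simp [Function.notMem_support.1 fun h ↦ hx (hfs h)]

section TestFunctions

variable {E F G : Type*} [NormedAddCommGroup E] [NormedSpace ℝ E] [NormedAddCommGroup F]
  [NormedSpace ℝ F] [NormedAddCommGroup G] [NormedSpace ℝ G]

/-- Membership in the space `C_c^∞(E, F)` of smooth compactly supported functions, as a predicate
on plain functions. -/
structure IsTestFunction (f : E → F) : Prop where
  contDiff : ContDiff ℝ ∞ f
  hasCompactSupport : HasCompactSupport f

namespace IsTestFunction

variable {f g : E → F} {a b : E → ℝ}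

theorem continuous (hf : IsTestFunction f) : Continuous f :=
  hf.contDiff.continuous

theorem differentiable (hf : IsTestFunction f) : Differentiable ℝ f :=
  hf.contDiff.differentiable (by simp)

theorem integrable [MeasurableSpace E] [OpensMeasurableSpace E] {μ : Measure E}
    [IsFiniteMeasureOnCompacts μ] (hf : IsTestFunction f) : Integrable f μ :=
  hf.continuous.integrable_of_hasCompactSupport hf.hasCompactSupport

theorem integrable_mul_norm_sq [MeasurableSpace E] [OpensMeasurableSpace E] {μ : Measure E}
    [IsFiniteMeasureOnCompacts μ] (hf : IsTestFunction f) {w : E → ℝ} (hw : Continuous w) :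
    Integrable (fun x ↦ w x * ‖f x‖ ^ 2) μ :=
  integrable_mul_norm_sq_of_continuousOn hf.hasCompactSupport hw.continuousOn
    hf.continuous.continuousOn (subset_tsupport f)

theorem integrable_norm_sq [MeasurableSpace E] [OpensMeasurableSpace E] {μ : Measure E}
    [IsFiniteMeasureOnCompacts μ] (hf : IsTestFunction f) : Integrable (fun x ↦ ‖f x‖ ^ 2) μ := by
  simpa using hf.integrable_mul_norm_sq (μ := μ) (continuous_const (y := (1 : ℝ)))

theorem add (hf : IsTestFunction f) (hg : IsTestFunction g) :
    IsTestFunction fun x ↦ f x + g x :=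
  ⟨hf.contDiff.add hg.contDiff, hf.hasCompactSupport.add hg.hasCompactSupport⟩

theorem smul_left (hf : IsTestFunction f) (ha : ContDiff ℝ ∞ a) :
    IsTestFunction fun x ↦ a x • f x :=
  ⟨ha.smul hf.contDiff, hf.hasCompactSupport.smul_left⟩

theorem mul_left (hb : IsTestFunction b) (ha : ContDiff ℝ ∞ a) :
    IsTestFunction fun x ↦ a x * b x :=
  hb.smul_left ha

theorem clm_comp (hf : IsTestFunction f) (L : F →L[ℝ] G) : IsTestFunction fun x ↦ L (f x) :=
  ⟨L.contDiff.comp hf.contDiff, hf.hasCompactSupport.comp_left L.map_zero⟩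

theorem fderiv (hf : IsTestFunction f) : IsTestFunction (fderiv ℝ f) :=
  ⟨hf.contDiff.fderiv_right (by simp), hf.hasCompactSupport.fderiv ℝ⟩

theorem fderiv_apply (hf : IsTestFunction f) (e : E) :
    IsTestFunction fun x ↦ _root_.fderiv ℝ f x e :=
  hf.fderiv.clm_comp (ContinuousLinearMap.apply ℝ F e)

theorem comp_const_sub (hf : IsTestFunction f) (y : E) : IsTestFunction fun x ↦ f (y - x) :=
  ⟨hf.contDiff.comp (contDiff_const.sub contDiff_id),
    hf.hasCompactSupport.comp_homeomorph (Homeomorph.subLeft y)⟩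

end IsTestFunction

theorem norm_fderiv_comp_const_sub {f : E → F} (hf : Differentiable ℝ f) (x y : E) :
    ‖fderiv ℝ (fun x ↦ f (y - x)) x‖ = ‖fderiv ℝ f (y - x)‖ := by
  have h : HasFDerivAt (fun x ↦ f (y - x)) _ x :=
    (hf (y - x)).hasFDerivAt.comp x ((hasFDerivAt_id x).const_sub y)
  rw [h.fderiv, ContinuousLinearMap.comp_neg, norm_neg, ContinuousLinearMap.comp_id]

theorem exists_isTestFunction_integral_sq_eq_one [FiniteDimensional ℝ E] [MeasurableSpace E]
    [BorelSpace E] (μ : Measure E) [μ.IsAddHaarMeasure] {r : ℝ} (hr : 0 < r) :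
    ∃ η : E → ℝ, IsTestFunction η ∧ Function.support η ⊆ Metric.ball 0 r ∧
      ∫ x, η x ^ 2 ∂μ = 1 := by
  let bump : ContDiffBump (0 : E) := ⟨r / 2, r, by positivity, by linarith⟩
  have hbump : IsTestFunction bump := ⟨bump.contDiff, bump.hasCompactSupport⟩
  set m := ∫ x, bump x ^ 2 ∂μ
  have hm : 0 < m := by
    refine (hbump.continuous.pow 2).integral_pos_of_hasCompactSupport_nonneg_nonzero
      (hbump.hasCompactSupport.comp_left (zero_pow two_ne_zero)) (fun x ↦ sq_nonneg _) (x := 0) ?_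
    simp [bump.one_of_mem_closedBall (Metric.mem_closedBall_self bump.rIn_pos.le)]
  refine ⟨fun x ↦ (√m)⁻¹ * bump x, hbump.mul_left contDiff_const, ?_, ?_⟩
  · exact (Function.support_mul_subset_right _ _).trans bump.support_eq.subset
  · simp only [mul_pow, integral_const_mul, inv_pow, Real.sq_sqrt hm.le]
    exact inv_mul_cancel₀ hm.ne'

end TestFunctions

section TwistedDerivative

variable {E : Type*} [NormedAddCommGroup E] [NormedSpace ℝ E]

/-- The derivative of `f` along `e` conjugated by the exponential `e^{-φ}`, that is
`e^{-φ} ∂_e (e^φ f) = ∂_e f + φ(e) f`. -/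
noncomputable def twistedDeriv (φ : E →L[ℝ] ℝ) (e : E) (f : E → ℝ) (x : E) : ℝ :=
  fderiv ℝ f x e + φ e * f x

variable {φ ψ : E →L[ℝ] ℝ} {f g : E → ℝ}

theorem IsTestFunction.twistedDeriv (hf : IsTestFunction f) (φ : E →L[ℝ] ℝ) (e : E) :
    IsTestFunction (twistedDeriv φ e f) :=
  (hf.fderiv_apply e).add (hf.mul_left contDiff_const)

theorem exp_mul_fderiv_apply (φ : E →L[ℝ] ℝ) (hf : Differentiable ℝ f) (x e : E) :
    Real.exp (φ x) * fderiv ℝ f x e = twistedDeriv (-φ) e (fun x ↦ Real.exp (φ x) * f x) x := by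
  have h := ((φ.hasFDerivAt (x := x)).exp.mul (hf x).hasFDerivAt).fderiv
  simp only [twistedDeriv, Pi.mul_def] at h ⊢
  simp [h]
  ring

theorem fderiv_fderiv_apply (hf : IsTestFunction f) (x a b : E) :
    fderiv ℝ (fun y ↦ fderiv ℝ f y b) x a = fderiv ℝ (fderiv ℝ f) x a b := by
  simp [fderiv_clm_apply (hf.fderiv.differentiable x) (differentiableAt_const b)]

theorem twistedDeriv_comm (hf : IsTestFunction f) (a b : E) :
    twistedDeriv φ a (twistedDeriv ψ b f) = twistedDeriv ψ b (twistedDeriv φ a f) := by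
  have expand (φ ψ : E →L[ℝ] ℝ) (a b x : E) : twistedDeriv φ a (twistedDeriv ψ b f) x =
      fderiv ℝ (fderiv ℝ f) x a b + ψ b * fderiv ℝ f x a
        + φ a * (fderiv ℝ f x b + ψ b * f x) := by
    have h := fderiv_fun_add ((hf.fderiv_apply b).differentiable x)
      ((hf.differentiable x).const_mul (ψ b))
    unfold twistedDeriv
    simp [h, fderiv_const_mul (hf.differentiable x), fderiv_fderiv_apply hf]
  have symm (x : E) : IsSymmSndFDerivAt ℝ f x :=
    (contDiff_infty.1 hf.contDiff 2).contDiffAt.isSymmSndFDerivAt (by simp)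
  ext x
  rw [expand, expand, symm x a b]
  ring

variable [FiniteDimensional ℝ E] [MeasurableSpace E] [BorelSpace E] {μ : Measure E}
  [μ.IsAddHaarMeasure]

theorem integral_mul_twistedDeriv (hf : IsTestFunction f) (hg : IsTestFunction g) (e : E) :
    ∫ x, f x * twistedDeriv φ e g x ∂μ = -∫ x, twistedDeriv (-φ) e f x * g x ∂μ := by
  have hf' := (hg.mul_left (hf.fderiv_apply e).contDiff).integrable (μ := μ)
  have hg' := ((hg.fderiv_apply e).mul_left hf.contDiff).integrable (μ := μ)
  have hfg := (hg.mul_left hf.contDiff).integrable (μ := μ)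
  have parts := integral_mul_fderiv_eq_neg_fderiv_mul_of_integrable hf' hg' hfg
    (fun x _ ↦ hf.differentiable x) (fun x _ ↦ hg.differentiable x)
  have left (x : E) : f x * twistedDeriv φ e g x = f x * fderiv ℝ g x e + φ e * (f x * g x) := by
    simp only [twistedDeriv]; ring
  have right (x : E) :
      twistedDeriv (-φ) e f x * g x = fderiv ℝ f x e * g x - φ e * (f x * g x) := by
    simp only [twistedDeriv, _root_.neg_apply]; ring
  simp only [left, right]
  rw [integral_add hg' (hfg.const_mul _), integral_sub hf' (hfg.const_mul _), parts]
  ring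

theorem integral_twistedDeriv_neg_mul_twistedDeriv_neg (hf : IsTestFunction f)
    (hg : IsTestFunction g) (a b : E) :
    ∫ x, twistedDeriv (-φ) b f x * twistedDeriv (-φ) a g x ∂μ =
      ∫ x, twistedDeriv φ a f x * twistedDeriv φ b g x ∂μ := by
  have hb := integral_mul_twistedDeriv (φ := φ) (μ := μ) hf (hg.twistedDeriv (-φ) a) b
  have ha := integral_mul_twistedDeriv (φ := -φ) (μ := μ) hf (hg.twistedDeriv φ b) a
  rw [neg_neg] at ha
  rw [← neg_eq_iff_eq_neg.2 hb, twistedDeriv_comm hg, ha, neg_neg]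

end TwistedDerivative

section ExpWeighted

variable {E : Type*} [NormedAddCommGroup E] [NormedSpace ℝ E] [MeasurableSpace E]

/-- The measure `e^{2φ} μ`. With the square in the density, `e^φ` maps `L²(e^{2φ} μ)` isometrically
onto `L²(μ)`. -/
noncomputable def expWeighted (μ : Measure E) (φ : E →L[ℝ] ℝ) : Measure E :=
  μ.withDensity fun x ↦ ENNReal.ofReal (Real.exp (φ x) ^ 2)

variable [BorelSpace E] {μ : Measure E} {φ : E →L[ℝ] ℝ}

instance [IsLocallyFiniteMeasure μ] : IsLocallyFiniteMeasure (expWeighted μ φ) :=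
  IsLocallyFiniteMeasure.withDensity_ofReal (by fun_prop)

theorem integral_expWeighted (f : E → ℝ) :
    ∫ x, f x ∂expWeighted μ φ = ∫ x, Real.exp (φ x) ^ 2 * f x ∂μ := by
  rw [expWeighted, integral_withDensity_eq_integral_toReal_smul (by fun_prop) (by simp)]
  simp [ENNReal.toReal_ofReal (sq_nonneg _)]

variable {F : Type*} [NormedAddCommGroup F] {f : E → F} {s : Set E} {c : ℝ}

theorem integral_norm_sq_expWeighted_le (hf : Integrable (fun x ↦ ‖f x‖ ^ 2) μ)
    (hfs : Function.support f ⊆ s) (hφ : ∀ x ∈ s, φ x ≤ c) :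
    ∫ x, ‖f x‖ ^ 2 ∂expWeighted μ φ ≤ Real.exp c ^ 2 * ∫ x in s, ‖f x‖ ^ 2 ∂μ := by
  rw [setIntegral_norm_sq_eq_integral hfs, integral_expWeighted, ← integral_const_mul]
  refine integral_mono_of_nonneg (.of_forall fun x ↦ by positivity) (hf.const_mul _)
    (.of_forall fun x ↦ ?_)
  by_cases hx : f x = 0
  · simp [hx]
  · have := hφ x (hfs hx)
    dsimp
    gcongr

theorem setIntegral_norm_sq_le_integral_expWeighted
    (hf : Integrable (fun x ↦ ‖f x‖ ^ 2) (expWeighted μ φ)) (hfs : Function.support f ⊆ s)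
    (hφ : ∀ x ∈ s, -c ≤ φ x) :
    ∫ x in s, ‖f x‖ ^ 2 ∂μ ≤ Real.exp c ^ 2 * ∫ x, ‖f x‖ ^ 2 ∂expWeighted μ φ := by
  have hf' : Integrable (fun x ↦ Real.exp (φ x) ^ 2 * ‖f x‖ ^ 2) μ := by
    rw [expWeighted, integrable_withDensity_iff_integrable_smul' (by fun_prop) (by simp)] at hf
    simpa [ENNReal.toReal_ofReal (sq_nonneg _)] using hf
  rw [setIntegral_norm_sq_eq_integral hfs, integral_expWeighted, ← integral_const_mul]
  refine integral_mono_of_nonneg (.of_forall fun x ↦ by positivity) (hf'.const_mul _)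
    (.of_forall fun x ↦ ?_)
  by_cases hx : f x = 0
  · simp [hx]
  · have hle : 1 ≤ Real.exp c ^ 2 * Real.exp (φ x) ^ 2 := by
      rw [← mul_pow, ← Real.exp_add]
      exact one_le_pow₀ (Real.one_le_exp (by linarith [hφ x (hfs hx)]))
    simpa [mul_assoc] using mul_le_mul_of_nonneg_right hle (sq_nonneg ‖f x‖)

end ExpWeighted

section FrobeniusNorm

variable {m n : Type*} [Fintype m] [Fintype n]

theorem frobenius_norm_sq (A : Matrix m n ℝ) : ‖A‖ ^ 2 = ∑ i, ∑ j, A i j ^ 2 := by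
  rw [frobenius_norm_def, ← Real.sqrt_eq_rpow, Real.sq_sqrt (by positivity)]
  simp

theorem frobNorm_eq_norm {d : ℕ} (A : Matrix (Fin d) (Fin d) ℝ) : frobNorm A = ‖A‖ := by
  rw [frobNorm, ← frobenius_norm_sq, Real.sqrt_sq (norm_nonneg A)]

theorem frobenius_norm_add_transpose_sq (A : Matrix n n ℝ) :
    ‖A + Aᵀ‖ ^ 2 = 2 * ‖A‖ ^ 2 + 2 * (A * A).trace := by
  have expand : ‖A + Aᵀ‖ ^ 2 = ‖A‖ ^ 2 + ‖Aᵀ‖ ^ 2 + 2 * (A * A).trace := by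
    simp only [frobenius_norm_sq, trace, diag, mul_apply, transpose_apply, Matrix.add_apply,
      Finset.mul_sum, ← Finset.sum_add_distrib]
    refine Finset.sum_congr rfl fun i _ ↦ Finset.sum_congr rfl fun j _ ↦ ?_
    ring
  rw [expand, frobenius_norm_transpose]
  ring

end FrobeniusNorm

section Jacobian

variable {d : ℕ} {v : EuclideanSpace ℝ (Fin d) → EuclideanSpace ℝ (Fin d)}

theorem jacobianMatrix_apply (hv : Differentiable ℝ v) (x : EuclideanSpace ℝ (Fin d))
    (i j : Fin d) :
    jacobianMatrix v x i j = fderiv ℝ (fun y ↦ v y i) x (EuclideanSpace.single j 1) := by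
  have h := ((EuclideanSpace.proj (𝕜 := ℝ) i).hasFDerivAt.comp x (hv x).hasFDerivAt).fderiv
  exact (congrArg (· (EuclideanSpace.single j 1)) h).symm

theorem IsTestFunction.apply (hv : IsTestFunction v) (i : Fin d) :
    IsTestFunction fun x ↦ v x i :=
  hv.clm_comp (EuclideanSpace.proj i)

theorem IsTestFunction.jacobianMatrix (hv : IsTestFunction v) :
    IsTestFunction (jacobianMatrix v) := by
  let L : (EuclideanSpace ℝ (Fin d) →L[ℝ] EuclideanSpace ℝ (Fin d)) →ₗ[ℝ]
      Matrix (Fin d) (Fin d) ℝ :=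
    { toFun T := Matrix.of fun i j ↦ T (EuclideanSpace.single j 1) i
      map_add' _ _ := rfl
      map_smul' _ _ := rfl }
  exact hv.fderiv.clm_comp L.toContinuousLinearMap

theorem support_jacobianMatrix_subset (v : EuclideanSpace ℝ (Fin d) → EuclideanSpace ℝ (Fin d)) :
    Function.support (jacobianMatrix v) ⊆ tsupport v := by
  refine fun x hx ↦ support_fderiv_subset ℝ fun h ↦ hx ?_
  ext i j
  simp [_root_.jacobianMatrix, h]

end Jacobian

section WeightedInequalities

theorem sq_mul_integral_sq_expWeighted_le {E : Type*} [NormedAddCommGroup E] [NormedSpace ℝ E]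
    [FiniteDimensional ℝ E] [MeasurableSpace E] [BorelSpace E] {μ : Measure E}
    [μ.IsAddHaarMeasure] {f : E → ℝ} (hf : IsTestFunction f) (φ : E →L[ℝ] ℝ) (a : E) :
    φ a ^ 2 * ∫ x, f x ^ 2 ∂expWeighted μ φ ≤ ∫ x, fderiv ℝ f x a ^ 2 ∂expWeighted μ φ := by
  set w : E → ℝ := fun x ↦ Real.exp (φ x) * f x
  have hw : IsTestFunction w := hf.mul_left φ.contDiff.exp
  have intg {g : E → ℝ} (hg : IsTestFunction g) : Integrable (fun x ↦ g x ^ 2) μ := by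
    simpa using hg.integrable_norm_sq (μ := μ)
  have hp := intg (hw.twistedDeriv φ a)
  have hm := intg (hw.twistedDeriv (-φ) a)
  have deriv_eq :
      ∫ x, fderiv ℝ f x a ^ 2 ∂expWeighted μ φ = ∫ x, twistedDeriv (-φ) a w x ^ 2 ∂μ := by
    simp only [integral_expWeighted, ← mul_pow, exp_mul_fderiv_apply φ hf.differentiable, w]
  have swap : ∫ x, twistedDeriv (-φ) a w x ^ 2 ∂μ = ∫ x, twistedDeriv φ a w x ^ 2 ∂μ := by
    simpa only [sq] using integral_twistedDeriv_neg_mul_twistedDeriv_neg hw hw a a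
  have sum_le : ∫ x, 2 * φ a ^ 2 * w x ^ 2 ∂μ ≤
      ∫ x, (twistedDeriv (-φ) a w x ^ 2 + twistedDeriv φ a w x ^ 2) ∂μ := by
    -- The cross terms cancel in the sum of the two squares.
    refine integral_mono ((intg hw).const_mul _) (hm.add hp) fun x ↦ ?_
    simp only [twistedDeriv, _root_.neg_apply]
    nlinarith [sq_nonneg (fderiv ℝ w x a)]
  rw [integral_const_mul, integral_add hm hp, ← swap] at sum_le
  rw [deriv_eq, integral_expWeighted]
  simp only [← mul_pow]
  linarith

variable {d : ℕ} {v : EuclideanSpace ℝ (Fin d) → EuclideanSpace ℝ (Fin d)}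

theorem sq_mul_integral_norm_sq_expWeighted_le (hv : IsTestFunction v)
    (φ : EuclideanSpace ℝ (Fin d) →L[ℝ] ℝ) (j : Fin d) :
    φ (EuclideanSpace.single j 1) ^ 2 * ∫ x, ‖v x‖ ^ 2 ∂expWeighted volume φ ≤
      ∫ x, ‖jacobianMatrix v x‖ ^ 2 ∂expWeighted volume φ := by
  set ν := expWeighted volume φ
  have intg {g : EuclideanSpace ℝ (Fin d) → ℝ} (hg : IsTestFunction g) :
      Integrable (fun x ↦ g x ^ 2) ν := by
    simpa using hg.integrable_norm_sq (μ := ν)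
  have hcol (i : Fin d) := intg ((hv.apply i).fderiv_apply (EuclideanSpace.single j 1))
  calc φ (EuclideanSpace.single j 1) ^ 2 * ∫ x, ‖v x‖ ^ 2 ∂ν
      = ∑ i, φ (EuclideanSpace.single j 1) ^ 2 * ∫ x, v x i ^ 2 ∂ν := by
        simp only [EuclideanSpace.real_norm_sq_eq]
        rw [integral_finsetSum _ fun i _ ↦ intg (hv.apply i), Finset.mul_sum]
    _ ≤ ∑ i, ∫ x, fderiv ℝ (fun y ↦ v y i) x (EuclideanSpace.single j 1) ^ 2 ∂ν :=
        Finset.sum_le_sum fun i _ ↦ sq_mul_integral_sq_expWeighted_le (hv.apply i) φ _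
    _ = ∫ x, ∑ i, jacobianMatrix v x i j ^ 2 ∂ν := by
        simp only [jacobianMatrix_apply hv.differentiable]
        rw [integral_finsetSum _ fun i _ ↦ hcol i]
    _ ≤ ∫ x, ‖jacobianMatrix v x‖ ^ 2 ∂ν := by
        refine integral_mono_of_nonneg (.of_forall fun x ↦ by positivity)
          hv.jacobianMatrix.integrable_norm_sq (.of_forall fun x ↦ ?_)
        simp only [frobenius_norm_sq]
        gcongr with i
        exact Finset.single_le_sum (f := fun j ↦ jacobianMatrix v x i j ^ 2)
          (fun _ _ ↦ sq_nonneg _) (Finset.mem_univ j)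

theorem integral_trace_jacobianMatrix_mul_self_nonneg (hv : IsTestFunction v)
    (φ : EuclideanSpace ℝ (Fin d) →L[ℝ] ℝ) :
    0 ≤ ∫ x, (jacobianMatrix v x * jacobianMatrix v x).trace ∂expWeighted volume φ := by
  set e : Fin d → EuclideanSpace ℝ (Fin d) := fun i ↦ EuclideanSpace.single i 1
  set w : Fin d → EuclideanSpace ℝ (Fin d) → ℝ := fun i x ↦ Real.exp (φ x) * v x i
  have hw (i : Fin d) : IsTestFunction (w i) := (hv.apply i).mul_left φ.contDiff.exp
  have integrable_mul {f g : EuclideanSpace ℝ (Fin d) → ℝ} (hf : IsTestFunction f)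
      (hg : IsTestFunction g) : Integrable fun x ↦ f x * g x :=
    (hg.mul_left hf.contDiff).integrable
  have twisted (x : EuclideanSpace ℝ (Fin d)) :
      Real.exp (φ x) ^ 2 * (jacobianMatrix v x * jacobianMatrix v x).trace =
        ∑ i, ∑ j, twistedDeriv (-φ) (e j) (w i) x * twistedDeriv (-φ) (e i) (w j) x := by
    simp only [trace, diag, mul_apply, Finset.mul_sum, w,
      ← exp_mul_fderiv_apply φ (hv.apply _).differentiable, jacobianMatrix_apply hv.differentiable]
    refine Finset.sum_congr rfl fun i _ ↦ Finset.sum_congr rfl fun j _ ↦ ?_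
    ring
  have swap : ∫ x, (jacobianMatrix v x * jacobianMatrix v x).trace ∂expWeighted volume φ =
      ∫ x, (∑ i, twistedDeriv φ (e i) (w i) x) ^ 2 := by
    simp only [integral_expWeighted, twisted, sq (Finset.sum _ _), Finset.sum_mul_sum]
    have hm (i j : Fin d) :=
      integrable_mul ((hw i).twistedDeriv (-φ) (e j)) ((hw j).twistedDeriv (-φ) (e i))
    have hp (i j : Fin d) :=
      integrable_mul ((hw i).twistedDeriv φ (e i)) ((hw j).twistedDeriv φ (e j))
    rw [integral_finsetSum _ fun i _ ↦ integrable_finsetSum _ fun j _ ↦ hm i j,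
      integral_finsetSum _ fun i _ ↦ integrable_finsetSum _ fun j _ ↦ hp i j]
    simp only [integral_finsetSum _ fun j _ ↦ hm _ j, integral_finsetSum _ fun j _ ↦ hp _ j,
      integral_twistedDeriv_neg_mul_twistedDeriv_neg (hw _) (hw _)]
  rw [swap]
  exact integral_nonneg fun x ↦ sq_nonneg _

theorem two_mul_integral_norm_jacobianMatrix_sq_le (hv : IsTestFunction v)
    (φ : EuclideanSpace ℝ (Fin d) →L[ℝ] ℝ) :
    2 * ∫ x, ‖jacobianMatrix v x‖ ^ 2 ∂expWeighted volume φ ≤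
      ∫ x, ‖jacobianMatrix v x + (jacobianMatrix v x)ᵀ‖ ^ 2 ∂expWeighted volume φ := by
  set ν := expWeighted volume φ
  have hJ := hv.jacobianMatrix
  have htrace : Integrable (fun x ↦ (jacobianMatrix v x * jacobianMatrix v x).trace) ν := by
    refine (hJ.continuous.matrix_mul hJ.continuous).matrix_trace.integrable_of_hasCompactSupport
      (hJ.hasCompactSupport.mono fun x hx h ↦ hx ?_)
    simp [h]
  simp only [frobenius_norm_add_transpose_sq]
  rw [integral_add (hJ.integrable_norm_sq.const_mul 2) (htrace.const_mul 2), integral_const_mul,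
    integral_const_mul]
  linarith [integral_trace_jacobianMatrix_mul_self_nonneg hv φ]

end WeightedInequalities

section Strain

variable {n : Type*} [Fintype n]

/-- The generalized symmetrized gradient `AᵀP + PᵀA` of Pompe and Neff, for a coefficient `A` and a
Jacobian `P`. -/
def strain (A P : Matrix n n ℝ) : Matrix n n ℝ :=
  Aᵀ * P + Pᵀ * A

theorem strain_eq_add_transpose (A P : Matrix n n ℝ) : strain A P = Aᵀ * P + (Aᵀ * P)ᵀ := by
  rw [strain, transpose_mul, transpose_transpose]

theorem continuous_strain : Continuous fun p : Matrix n n ℝ × Matrix n n ℝ ↦ strain p.1 p.2 :=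
  (continuous_fst.matrix_transpose.matrix_mul continuous_snd).add
    (continuous_snd.matrix_transpose.matrix_mul continuous_fst)

theorem norm_strain_le (A P : Matrix n n ℝ) : ‖strain A P‖ ≤ 2 * (‖A‖ * ‖P‖) := by
  refine (norm_add_le _ _).trans ?_
  have h₁ := frobenius_norm_mul Aᵀ P
  have h₂ := frobenius_norm_mul Pᵀ A
  rw [frobenius_norm_transpose] at h₁ h₂
  linarith [mul_comm ‖A‖ ‖P‖]

theorem norm_strain_sq_le (A B P R : Matrix n n ℝ) (t : ℝ) :
    ‖strain A R‖ ^ 2 ≤ 3 * (t ^ 2 * ‖strain B P‖ ^ 2) + 12 * (t ^ 2 * (‖A - B‖ * ‖P‖) ^ 2) +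
      12 * (‖A‖ ^ 2 * ‖R - t • P‖ ^ 2) := by
  have split : strain A R = t • strain B P + t • strain (A - B) P + strain A (R - t • P) := by
    simp only [strain, transpose_sub, transpose_smul, Matrix.sub_mul, Matrix.mul_sub,
      Matrix.smul_mul, Matrix.mul_smul, smul_add, smul_sub]
    abel
  have triangle : ‖strain A R‖ ≤
      |t| * ‖strain B P‖ + |t| * (2 * (‖A - B‖ * ‖P‖)) + 2 * (‖A‖ * ‖R - t • P‖) := by
    rw [split]
    refine norm_add₃_le.trans ?_
    simp only [norm_smul, Real.norm_eq_abs]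
    gcongr <;> exact norm_strain_le _ _
  have add_sq_le_three (a b c : ℝ) : (a + b + c) ^ 2 ≤ 3 * (a ^ 2 + b ^ 2 + c ^ 2) := by
    linarith [sq_nonneg (a - b), sq_nonneg (b - c), sq_nonneg (a - c)]
  calc ‖strain A R‖ ^ 2
      ≤ (|t| * ‖strain B P‖ + |t| * (2 * (‖A - B‖ * ‖P‖)) + 2 * (‖A‖ * ‖R - t • P‖)) ^ 2 := by
        gcongr
    _ ≤ 3 * ((|t| * ‖strain B P‖) ^ 2 + (|t| * (2 * (‖A - B‖ * ‖P‖))) ^ 2 +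
          (2 * (‖A‖ * ‖R - t • P‖)) ^ 2) := add_sq_le_three _ _ _
    _ = _ := by simp only [mul_pow, sq_abs]; ring

theorem sq_mul_norm_sq_le {V : Type*} [NormedAddCommGroup V] [NormedSpace ℝ V] (P R : V) (t : ℝ) :
    t ^ 2 * ‖P‖ ^ 2 ≤ 2 * ‖R‖ ^ 2 + 2 * ‖R - t • P‖ ^ 2 := by
  have h := norm_sub_le R (R - t • P)
  rw [sub_sub_cancel, norm_smul] at h
  calc t ^ 2 * ‖P‖ ^ 2 = (‖t‖ * ‖P‖) ^ 2 := by rw [mul_pow, Real.norm_eq_abs, sq_abs]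
    _ ≤ (‖R‖ + ‖R - t • P‖) ^ 2 := by gcongr
    _ ≤ 2 * (‖R‖ ^ 2 + ‖R - t • P‖ ^ 2) := add_sq_le
    _ = _ := mul_add ..

variable [DecidableEq n]

theorem norm_le_norm_inv_mul_norm_transpose_mul {A : Matrix n n ℝ} (hA : IsUnit A.det)
    (P : Matrix n n ℝ) : ‖P‖ ≤ ‖A⁻¹‖ * ‖Aᵀ * P‖ := by
  have hA' : IsUnit Aᵀ.det := by rwa [det_transpose]
  calc ‖P‖ = ‖(Aᵀ)⁻¹ * (Aᵀ * P)‖ := by rw [nonsing_inv_mul_cancel_left _ _ hA']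
    _ ≤ ‖(Aᵀ)⁻¹‖ * ‖Aᵀ * P‖ := frobenius_norm_mul _ _
    _ = ‖A⁻¹‖ * ‖Aᵀ * P‖ := by rw [← transpose_nonsing_inv, frobenius_norm_transpose]

theorem exists_norm_inv_le (K : ℝ) {c : ℝ} (hc : 0 < c) :
    ∃ M > 0, ∀ A : Matrix n n ℝ, ‖A‖ ≤ K → c ≤ |A.det| → ‖A⁻¹‖ ≤ M := by
  have : ProperSpace (Matrix n n ℝ) := FiniteDimensional.proper ℝ _
  obtain ⟨B, hB⟩ := (isCompact_closedBall (0 : Matrix n n ℝ) K).exists_bound_of_continuousOn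
    (f := adjugate) continuous_id.matrix_adjugate.continuousOn
  refine ⟨c⁻¹ * max B 1, by positivity, fun A hA hdet ↦ ?_⟩
  rw [inv_def, Ring.inverse_eq_inv', norm_smul, norm_inv, Real.norm_eq_abs]
  have := (hB A (by simpa using hA)).trans (le_max_left B 1)
  gcongr

end Strain

section ConstantCoefficients

variable {d : ℕ} {v : EuclideanSpace ℝ (Fin d) → EuclideanSpace ℝ (Fin d)}

theorem jacobianMatrix_toEuclideanCLM (hv : Differentiable ℝ v) (A : Matrix (Fin d) (Fin d) ℝ)
    (x : EuclideanSpace ℝ (Fin d)) :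
    jacobianMatrix (fun y ↦ toEuclideanCLM (𝕜 := ℝ) A (v y)) x = A * jacobianMatrix v x := by
  have h := ((toEuclideanCLM (𝕜 := ℝ) A).hasFDerivAt.comp x (hv x).hasFDerivAt).fderiv
  ext i j
  exact congrArg (fun T ↦ T (EuclideanSpace.single j 1) i) h

theorem two_mul_integral_norm_jacobianMatrix_sq_le_strain (hv : IsTestFunction v)
    {A : Matrix (Fin d) (Fin d) ℝ} (hA : IsUnit A.det) (φ : EuclideanSpace ℝ (Fin d) →L[ℝ] ℝ) :
    2 * ∫ x, ‖jacobianMatrix v x‖ ^ 2 ∂expWeighted volume φ ≤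
      ‖A⁻¹‖ ^ 2 * ∫ x, ‖strain A (jacobianMatrix v x)‖ ^ 2 ∂expWeighted volume φ := by
  set ν := expWeighted volume φ
  have hAv := hv.clm_comp (toEuclideanCLM (𝕜 := ℝ) Aᵀ)
  have korn := two_mul_integral_norm_jacobianMatrix_sq_le hAv φ
  have hJ := hAv.jacobianMatrix.integrable_norm_sq (μ := ν)
  simp only [jacobianMatrix_toEuclideanCLM hv.differentiable, ← strain_eq_add_transpose] at korn hJ
  have bound : ∫ x, ‖jacobianMatrix v x‖ ^ 2 ∂ν ≤
      ‖A⁻¹‖ ^ 2 * ∫ x, ‖Aᵀ * jacobianMatrix v x‖ ^ 2 ∂ν := by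
    rw [← integral_const_mul]
    refine integral_mono hv.jacobianMatrix.integrable_norm_sq (hJ.const_mul _) fun x ↦ ?_
    simp only [← mul_pow]
    gcongr
    exact norm_le_norm_inv_mul_norm_transpose_mul hA _
  linarith [mul_le_mul_of_nonneg_left korn (sq_nonneg ‖A⁻¹‖)]

end ConstantCoefficients

section Localization

variable {d : ℕ} {v : EuclideanSpace ℝ (Fin d) → EuclideanSpace ℝ (Fin d)}
  {θ : EuclideanSpace ℝ (Fin d) → ℝ}

theorem norm_jacobianMatrix_smul_sub (hv : Differentiable ℝ v) (hθ : Differentiable ℝ θ)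
    (x : EuclideanSpace ℝ (Fin d)) :
    ‖jacobianMatrix (fun y ↦ θ y • v y) x - θ x • jacobianMatrix v x‖ =
      ‖fderiv ℝ θ x‖ * ‖v x‖ := by
  have leibniz (i j : Fin d) :
      (jacobianMatrix (fun y ↦ θ y • v y) x - θ x • jacobianMatrix v x) i j =
        v x i * fderiv ℝ θ x (EuclideanSpace.single j 1) := by
    simp [jacobianMatrix, fderiv_fun_smul (hθ x) (hv x), mul_comm]
  rw [← sq_eq_sq₀ (norm_nonneg _) (by positivity), frobenius_norm_sq, mul_pow,
    EuclideanSpace.real_norm_sq_eq, (EuclideanSpace.basisFun (Fin d) ℝ).norm_dual]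
  simp only [leibniz, EuclideanSpace.basisFun_apply, mul_pow, ← Finset.mul_sum, ← Finset.sum_mul]
  exact mul_comm _ _

/-- The conditions on the coefficient field `F` under which the constants of the estimates are
uniform: bounds on `F` and on its pointwise inverses, and oscillation at most `ε` at scale `r`. -/
structure AdmissibleOn (K M ε r : ℝ)
    (F : EuclideanSpace ℝ (Fin d) → Matrix (Fin d) (Fin d) ℝ)
    (T : Set (EuclideanSpace ℝ (Fin d))) : Prop where
  continuousOn : ContinuousOn F T
  norm_le : ∀ x ∈ T, ‖F x‖ ≤ K
  isUnit_det : ∀ x ∈ T, IsUnit (F x).det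
  norm_inv_le : ∀ x ∈ T, ‖(F x)⁻¹‖ ≤ M
  norm_sub_le : ∀ x ∈ T, ∀ y ∈ T, dist x y < r → ‖F x - F y‖ ≤ ε

variable {K M ε r : ℝ} {F : EuclideanSpace ℝ (Fin d) → Matrix (Fin d) (Fin d) ℝ}
  {T T' : Set (EuclideanSpace ℝ (Fin d))}

theorem AdmissibleOn.mono (hF : AdmissibleOn K M ε r F T') (h : T ⊆ T') :
    AdmissibleOn K M ε r F T where
  continuousOn := hF.continuousOn.mono h
  norm_le x hx := hF.norm_le x (h hx)
  isUnit_det x hx := hF.isUnit_det x (h hx)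
  norm_inv_le x hx := hF.norm_inv_le x (h hx)
  norm_sub_le x hx y hy := hF.norm_sub_le x (h hx) y (h hy)

theorem support_strain_jacobianMatrix_subset :
    Function.support (fun x ↦ strain (F x) (jacobianMatrix v x)) ⊆ tsupport v :=
  fun x hx ↦ support_jacobianMatrix_subset v fun h ↦ hx (by simp [strain, h])

theorem continuousOn_strain_jacobianMatrix (hF : ContinuousOn F T) (hv : IsTestFunction v) :
    ContinuousOn (fun x ↦ strain (F x) (jacobianMatrix v x)) T :=
  continuous_strain.comp_continuousOn (f := fun x ↦ (F x, jacobianMatrix v x))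
    (hF.prodMk hv.jacobianMatrix.continuous.continuousOn)

theorem integrable_mul_norm_strain_jacobianMatrix_sq {μ : Measure (EuclideanSpace ℝ (Fin d))}
    [IsFiniteMeasureOnCompacts μ] (hv : IsTestFunction v) (hF : ContinuousOn F (tsupport v))
    {w : EuclideanSpace ℝ (Fin d) → ℝ} (hw : Continuous w) :
    Integrable (fun x ↦ w x * ‖strain (F x) (jacobianMatrix v x)‖ ^ 2) μ :=
  integrable_mul_norm_sq_of_continuousOn hv.hasCompactSupport hw.continuousOn
    (continuousOn_strain_jacobianMatrix hF hv) support_strain_jacobianMatrix_subset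

theorem integrable_norm_strain_jacobianMatrix_sq {μ : Measure (EuclideanSpace ℝ (Fin d))}
    [IsFiniteMeasureOnCompacts μ] (hv : IsTestFunction v) (hF : ContinuousOn F (tsupport v)) :
    Integrable (fun x ↦ ‖strain (F x) (jacobianMatrix v x)‖ ^ 2) μ := by
  simpa using
    integrable_mul_norm_strain_jacobianMatrix_sq hv hF (μ := μ) (continuous_const (y := (1 : ℝ)))

theorem norm_strain_jacobianMatrix_smul_sq_le (hv : Differentiable ℝ v) (hθ : Differentiable ℝ θ)
    (hF : AdmissibleOn K M ε r F (tsupport v))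
    (hθr : ∀ x ∈ Function.support θ, ∀ y ∈ Function.support θ, dist x y < r)
    {z : EuclideanSpace ℝ (Fin d)} (hz : z ∈ tsupport v) (hzθ : z ∈ Function.support θ)
    (x : EuclideanSpace ℝ (Fin d)) :
    ‖strain (F z) (jacobianMatrix (fun y ↦ θ y • v y) x)‖ ^ 2 ≤
      3 * (θ x ^ 2 * ‖strain (F x) (jacobianMatrix v x)‖ ^ 2) +
      12 * ε ^ 2 * (θ x ^ 2 * ‖jacobianMatrix v x‖ ^ 2) +
      12 * K ^ 2 * (‖fderiv ℝ θ x‖ ^ 2 * ‖v x‖ ^ 2) := by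
  have oscillation : θ x ^ 2 * (‖F z - F x‖ * ‖jacobianMatrix v x‖) ^ 2 ≤
      ε ^ 2 * (θ x ^ 2 * ‖jacobianMatrix v x‖ ^ 2) := by
    by_cases hx : θ x = 0 ∨ jacobianMatrix v x = 0
    · rcases hx with hx | hx <;> simp [hx]
    obtain ⟨hxθ, hxJ⟩ := not_or.1 hx
    have := hF.norm_sub_le z hz x (support_jacobianMatrix_subset v hxJ) (hθr z hzθ x hxθ)
    rw [mul_left_comm, ← mul_pow ε]
    gcongr
  have commutator : ‖F z‖ ^ 2 * (‖fderiv ℝ θ x‖ * ‖v x‖) ^ 2 ≤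
      K ^ 2 * (‖fderiv ℝ θ x‖ ^ 2 * ‖v x‖ ^ 2) := by
    have := hF.norm_le z hz
    rw [← mul_pow _ ‖v x‖]
    gcongr
  have split := norm_strain_sq_le (F z) (F x) (jacobianMatrix v x)
    (jacobianMatrix (fun y ↦ θ y • v y) x) (θ x)
  rw [norm_jacobianMatrix_smul_sub hv hθ] at split
  linarith

theorem integral_norm_strain_jacobianMatrix_smul_sq_le (hv : IsTestFunction v)
    (hθ : IsTestFunction θ) (hF : AdmissibleOn K M ε r F (tsupport v))
    (hθr : ∀ x ∈ Function.support θ, ∀ y ∈ Function.support θ, dist x y < r)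
    {z : EuclideanSpace ℝ (Fin d)} (hz : z ∈ tsupport v) (hzθ : z ∈ Function.support θ)
    (φ : EuclideanSpace ℝ (Fin d) →L[ℝ] ℝ) :
    ∫ x, ‖strain (F z) (jacobianMatrix (fun y ↦ θ y • v y) x)‖ ^ 2 ∂expWeighted volume φ ≤
      3 * (∫ x, θ x ^ 2 * ‖strain (F x) (jacobianMatrix v x)‖ ^ 2 ∂expWeighted volume φ) +
      12 * ε ^ 2 * (∫ x, θ x ^ 2 * ‖jacobianMatrix v x‖ ^ 2 ∂expWeighted volume φ) +
      12 * K ^ 2 * (∫ x, ‖fderiv ℝ θ x‖ ^ 2 * ‖v x‖ ^ 2 ∂expWeighted volume φ) := by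
  set ν := expWeighted volume φ
  have hθ₂ : Continuous fun x ↦ θ x ^ 2 := hθ.continuous.pow 2
  have hdθ : Continuous fun x ↦ ‖fderiv ℝ θ x‖ ^ 2 := hθ.fderiv.continuous.norm.pow 2
  have hZ := (integrable_mul_norm_strain_jacobianMatrix_sq (μ := ν) hv hF.continuousOn
    hθ₂).const_mul 3
  have hX := (hv.jacobianMatrix.integrable_mul_norm_sq (μ := ν) hθ₂).const_mul (12 * ε ^ 2)
  have hY := (hv.integrable_mul_norm_sq (μ := ν) hdθ).const_mul (12 * K ^ 2)
  rw [← integral_const_mul, ← integral_const_mul, ← integral_const_mul,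
    ← integral_add hZ hX, ← integral_add (hZ.fun_add hX) hY]
  exact integral_mono_of_nonneg (.of_forall fun x ↦ sq_nonneg _) ((hZ.add hX).add hY)
    (.of_forall (norm_strain_jacobianMatrix_smul_sq_le hv.differentiable hθ.differentiable hF hθr
      hz hzθ))

theorem integral_sq_mul_norm_jacobianMatrix_sq_le (hv : IsTestFunction v) (hθ : IsTestFunction θ)
    (hF : AdmissibleOn K M ε r F (tsupport v)) (hε : 24 * (M * ε) ^ 2 ≤ 1)
    (hθr : ∀ x ∈ Function.support θ, ∀ y ∈ Function.support θ, dist x y < r)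
    (φ : EuclideanSpace ℝ (Fin d) →L[ℝ] ℝ) :
    ∫ x, θ x ^ 2 * ‖jacobianMatrix v x‖ ^ 2 ∂expWeighted volume φ ≤
      6 * M ^ 2 * (∫ x, θ x ^ 2 * ‖strain (F x) (jacobianMatrix v x)‖ ^ 2 ∂expWeighted volume φ) +
      (24 * (M * K) ^ 2 + 4) *
        (∫ x, ‖fderiv ℝ θ x‖ ^ 2 * ‖v x‖ ^ 2 ∂expWeighted volume φ) := by
  set ν := expWeighted volume φ
  by_cases hz : ∃ z, z ∈ tsupport v ∧ z ∈ Function.support θ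
  swap
  · have vanish (x) : θ x ^ 2 * ‖jacobianMatrix v x‖ ^ 2 = 0 := by
      by_contra hx
      obtain ⟨hxθ, hxJ⟩ : θ x ≠ 0 ∧ jacobianMatrix v x ≠ 0 := by simpa using hx
      exact hz ⟨x, support_jacobianMatrix_subset v hxJ, hxθ⟩
    simp only [vanish, integral_zero]
    positivity
  obtain ⟨z, hz, hzθ⟩ := hz
  have hθv : IsTestFunction fun y ↦ θ y • v y := hv.smul_left hθ.contDiff
  have korn := two_mul_integral_norm_jacobianMatrix_sq_le_strain hθv (hF.isUnit_det z hz) φ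
  have freeze := integral_norm_strain_jacobianMatrix_smul_sq_le hv hθ hF hθr hz hzθ φ
  have hdθ : Continuous fun x ↦ ‖fderiv ℝ θ x‖ ^ 2 := hθ.fderiv.continuous.norm.pow 2
  have hR := (hθv.jacobianMatrix.integrable_norm_sq (μ := ν)).const_mul 2
  have hY := (hv.integrable_mul_norm_sq (μ := ν) hdθ).const_mul 2
  have commute : ∫ x, θ x ^ 2 * ‖jacobianMatrix v x‖ ^ 2 ∂ν ≤
      2 * (∫ x, ‖jacobianMatrix (fun y ↦ θ y • v y) x‖ ^ 2 ∂ν) +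
        2 * ∫ x, ‖fderiv ℝ θ x‖ ^ 2 * ‖v x‖ ^ 2 ∂ν := by
    rw [← integral_const_mul, ← integral_const_mul, ← integral_add hR hY]
    refine integral_mono (hv.jacobianMatrix.integrable_mul_norm_sq (hθ.continuous.pow 2))
      (hR.add hY) fun x ↦ ?_
    simp only [← mul_pow, ← norm_jacobianMatrix_smul_sub hv.differentiable hθ.differentiable x]
    rw [mul_pow]
    exact sq_mul_norm_sq_le ..
  have hM : ‖(F z)⁻¹‖ ^ 2 ≤ M ^ 2 := by
    have := hF.norm_inv_le z hz
    gcongr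
  have hX₀ : 0 ≤ ∫ x, θ x ^ 2 * ‖jacobianMatrix v x‖ ^ 2 ∂ν := by positivity
  have korn' := korn.trans (mul_le_mul hM freeze (by positivity) (sq_nonneg M))
  have absorb := mul_le_mul_of_nonneg_right hε hX₀
  linarith

end Localization

section Convolution

variable {G : Type*} [AddGroup G] [MeasurableSpace G] [MeasurableAdd₂ G] [MeasurableNeg G]
  {μ ν : Measure G} [SFinite μ] [SFinite ν] [μ.IsAddRightInvariant] {g h : G → ℝ}

theorem integrable_integral_comp_sub_mul (hh : Integrable h μ) (hg : Integrable g ν) :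
    Integrable (fun y ↦ ∫ x, h (y - x) * g x ∂ν) μ := by
  simpa [mul_comm] using
    (hg.convolution_integrand (ContinuousLinearMap.mul ℝ ℝ) hh).integral_prod_left

theorem integral_integral_comp_sub_mul (hh : Integrable h μ) (hg : Integrable g ν) :
    ∫ y, ∫ x, h (y - x) * g x ∂ν ∂μ = (∫ x, h x ∂μ) * ∫ x, g x ∂ν := by
  simpa [convolution, mul_comm] using integral_convolution (ContinuousLinearMap.mul ℝ ℝ) hg hh

end Convolution

section Absorption

theorem exists_garding (d : ℕ) (K : ℝ) {M ε r : ℝ} (hr : 0 < r) (hε : 24 * (M * ε) ^ 2 ≤ 1) :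
    ∃ L, ∀ (φ : EuclideanSpace ℝ (Fin d) →L[ℝ] ℝ)
      (F : EuclideanSpace ℝ (Fin d) → Matrix (Fin d) (Fin d) ℝ)
      (v : EuclideanSpace ℝ (Fin d) → EuclideanSpace ℝ (Fin d)),
      AdmissibleOn K M ε r F (tsupport v) → IsTestFunction v →
      ∫ x, ‖jacobianMatrix v x‖ ^ 2 ∂expWeighted volume φ ≤
        6 * M ^ 2 * (∫ x, ‖strain (F x) (jacobianMatrix v x)‖ ^ 2 ∂expWeighted volume φ) +
        L * ∫ x, ‖v x‖ ^ 2 ∂expWeighted volume φ := by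
  obtain ⟨η, hη, hηr, hη₁⟩ := exists_isTestFunction_integral_sq_eq_one
    (volume : Measure (EuclideanSpace ℝ (Fin d))) (half_pos hr)
  refine ⟨(24 * (M * K) ^ 2 + 4) * ∫ x, ‖fderiv ℝ η x‖ ^ 2, fun φ F v hF hv ↦ ?_⟩
  set ν := expWeighted volume φ
  have support_translate (y x : EuclideanSpace ℝ (Fin d))
      (hx : x ∈ Function.support fun x ↦ η (y - x)) : dist x y < r / 2 := by
    simpa [dist_eq_norm, norm_sub_rev] using hηr hx
  have localized (y) := integral_sq_mul_norm_jacobianMatrix_sq_le hv (hη.comp_const_sub y) hF hε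
    (fun x hx x' hx' ↦ (dist_triangle_right x x' y).trans_lt
      (by linarith [support_translate y x hx, support_translate y x' hx'])) φ
  simp only [norm_fderiv_comp_const_sub hη.differentiable] at localized
  have hη₂ : Integrable fun x ↦ η x ^ 2 := by simpa using hη.integrable_norm_sq (μ := volume)
  have hdη := hη.fderiv.integrable_norm_sq (μ := volume)
  have hJ := hv.jacobianMatrix.integrable_norm_sq (μ := ν)
  have hS := integrable_norm_strain_jacobianMatrix_sq (μ := ν) hv hF.continuousOn
  have hV := hv.integrable_norm_sq (μ := ν)
  have hSy := (integrable_integral_comp_sub_mul hη₂ hS).const_mul (6 * M ^ 2)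
  have hVy := (integrable_integral_comp_sub_mul hdη hV).const_mul (24 * (M * K) ^ 2 + 4)
  have averaged := integral_mono (integrable_integral_comp_sub_mul hη₂ hJ) (hSy.fun_add hVy)
    localized
  rw [integral_add hSy hVy, integral_const_mul, integral_const_mul,
    integral_integral_comp_sub_mul hη₂ hJ, integral_integral_comp_sub_mul hη₂ hS,
    integral_integral_comp_sub_mul hdη hV, hη₁] at averaged
  linarith

theorem exists_admissibleOn (d : ℕ) (K : ℝ) {c : ℝ} (hc : 0 < c) {m : ℝ → ℝ}
    (hm : Filter.Tendsto m (𝓝 0) (𝓝 0)) :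
    ∃ M > 0, ∃ ε, 24 * (M * ε) ^ 2 ≤ 1 ∧ ∃ r > 0,
      ∀ (F : EuclideanSpace ℝ (Fin d) → Matrix (Fin d) (Fin d) ℝ) (Ω : Set _),
        (∀ x ∈ Ω, ‖F x‖ ≤ K) → (∀ x ∈ Ω, ∀ y ∈ Ω, ‖F x - F y‖ ≤ m ‖x - y‖) →
        (∀ x ∈ Ω, c ≤ |(F x).det|) → AdmissibleOn K M ε r F Ω := by
  obtain ⟨M, hM, hinv⟩ := exists_norm_inv_le (n := Fin d) K hc
  have hMε : M * (5 * M)⁻¹ = 1 / 5 := by field_simp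
  obtain ⟨r, hr, hmr⟩ := Metric.eventually_nhds_iff.1
    (hm.eventually_le_const (by positivity : 0 < (5 * M)⁻¹))
  refine ⟨M, hM, (5 * M)⁻¹, by rw [hMε]; norm_num, r, hr, fun F Ω hK hosc hdet ↦ ?_⟩
  refine ⟨fun x hx ↦ ?_, hK, fun x hx ↦ ?_, fun x hx ↦ hinv _ (hK x hx) (hdet x hx),
    fun x hx y hy hxy ↦ (hosc x hx y hy).trans (hmr ?_)⟩
  · refine tendsto_iff_norm_sub_tendsto_zero.2 (squeeze_zero' (.of_forall fun _ ↦ norm_nonneg _)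
      (eventually_nhdsWithin_of_forall fun y hy ↦ hosc y hy x hx) (hm.comp ?_))
    exact (continuous_id.sub continuous_const).norm.continuousWithinAt.tendsto.trans (by simp)
  · exact isUnit_iff_ne_zero.2 (abs_pos.1 (hc.trans_le (hdet x hx)))
  · simpa [dist_eq_norm] using hxy

theorem exists_integral_expWeighted_le_strain {d : ℕ} {ℓ : EuclideanSpace ℝ (Fin d) →L[ℝ] ℝ}
    (hℓ : ℓ ≠ 0) (K : ℝ) {M ε r : ℝ} (hr : 0 < r) (hε : 24 * (M * ε) ^ 2 ≤ 1) :
    ∃ τ : ℝ, ∀ (F : EuclideanSpace ℝ (Fin d) → Matrix (Fin d) (Fin d) ℝ)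
      (v : EuclideanSpace ℝ (Fin d) → EuclideanSpace ℝ (Fin d)),
      AdmissibleOn K M ε r F (tsupport v) → IsTestFunction v →
      (∫ x, ‖v x‖ ^ 2 ∂expWeighted volume (τ • ℓ)) +
          ∫ x, ‖jacobianMatrix v x‖ ^ 2 ∂expWeighted volume (τ • ℓ) ≤
        24 * M ^ 2 *
          ∫ x, ‖strain (F x) (jacobianMatrix v x)‖ ^ 2 ∂expWeighted volume (τ • ℓ) := by
  obtain ⟨L, hL⟩ := exists_garding d K hr hε
  obtain ⟨j, hj⟩ : ∃ j, ℓ (EuclideanSpace.single j 1) ≠ 0 := by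
    by_contra! h
    refine hℓ (norm_eq_zero.1 (pow_eq_zero_iff two_ne_zero |>.1 ?_))
    simp [(EuclideanSpace.basisFun (Fin d) ℝ).norm_dual, h]
  refine ⟨√(max (2 * L) 1) / ℓ (EuclideanSpace.single j 1), fun F v hF hv ↦ ?_⟩
  set φ := (√(max (2 * L) 1) / ℓ (EuclideanSpace.single j 1)) • ℓ
  have hφ : φ (EuclideanSpace.single j 1) ^ 2 = max (2 * L) 1 := by
    simp [φ, div_mul_cancel₀ _ hj, Real.sq_sqrt]
  set V := ∫ x, ‖v x‖ ^ 2 ∂expWeighted volume φ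
  have hV : 0 ≤ V := by positivity
  have garding := hL φ F v hF hv
  have poincare := sq_mul_integral_norm_sq_expWeighted_le hv φ j
  rw [hφ] at poincare
  have absorb := (mul_le_mul_of_nonneg_right (le_max_left (2 * L) 1) hV).trans poincare
  have control := (mul_le_mul_of_nonneg_right (le_max_right (2 * L) 1) hV).trans poincare
  linarith

theorem korn_pompe_neff_general {d : ℕ} {Ω : Set (EuclideanSpace ℝ (Fin d))}
    {ℓ : EuclideanSpace ℝ (Fin d) →L[ℝ] ℝ} (hℓ : ℓ ≠ 0) {ρ : ℝ} (hΩ : ∀ x ∈ Ω, |ℓ x| ≤ ρ)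
    (K : ℝ) {c : ℝ} (hc : 0 < c) {m : ℝ → ℝ} (hm : Filter.Tendsto m (𝓝 0) (𝓝 0)) :
    ∃ C > 0, ∀ F : EuclideanSpace ℝ (Fin d) → Matrix (Fin d) (Fin d) ℝ,
      (∀ x ∈ Ω, ‖F x‖ ≤ K) → (∀ x ∈ Ω, ∀ y ∈ Ω, ‖F x - F y‖ ≤ m ‖x - y‖) →
      (∀ x ∈ Ω, c ≤ |(F x).det|) →
      ∀ v : EuclideanSpace ℝ (Fin d) → EuclideanSpace ℝ (Fin d),
        ContDiff ℝ ∞ v → HasCompactSupport v → tsupport v ⊆ Ω →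
        C * ((∫ x in Ω, ‖v x‖ ^ 2) + ∫ x in Ω, ‖jacobianMatrix v x‖ ^ 2) ≤
          ∫ x in Ω, ‖strain (F x) (jacobianMatrix v x)‖ ^ 2 := by
  obtain ⟨M, hM, ε, hε, r, hr, admissible⟩ := exists_admissibleOn d K hc hm
  obtain ⟨τ, weighted⟩ := exists_integral_expWeighted_le_strain hℓ K hr hε
  set W := Real.exp (|τ| * ρ) ^ 2
  refine ⟨(W * (24 * M ^ 2) * W)⁻¹, by positivity, fun F hK hosc hdet v hv hvc hvΩ ↦ ?_⟩
  have hF := (admissible F Ω hK hosc hdet).mono hvΩ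
  have hvt : IsTestFunction v := ⟨hv, hvc⟩
  have hφ (x) (hx : x ∈ Ω) : |(τ • ℓ) x| ≤ |τ| * ρ := by
    simpa [abs_mul] using mul_le_mul_of_nonneg_left (hΩ x hx) (abs_nonneg τ)
  have hlow (x) (hx : x ∈ Ω) := (abs_le.1 (hφ x hx)).1
  have hV := setIntegral_norm_sq_le_integral_expWeighted (μ := volume) hvt.integrable_norm_sq
    ((subset_tsupport v).trans hvΩ) hlow
  have hJ := setIntegral_norm_sq_le_integral_expWeighted (μ := volume)
    hvt.jacobianMatrix.integrable_norm_sq ((support_jacobianMatrix_subset v).trans hvΩ) hlow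
  have hS := integral_norm_sq_expWeighted_le (μ := volume)
    (integrable_norm_strain_jacobianMatrix_sq hvt hF.continuousOn)
    (support_strain_jacobianMatrix_subset.trans hvΩ) fun x hx ↦ (abs_le.1 (hφ x hx)).2
  rw [inv_mul_le_iff₀ (by positivity)]
  calc (∫ x in Ω, ‖v x‖ ^ 2) + ∫ x in Ω, ‖jacobianMatrix v x‖ ^ 2
      ≤ W * ((∫ x, ‖v x‖ ^ 2 ∂expWeighted volume (τ • ℓ)) +
          ∫ x, ‖jacobianMatrix v x‖ ^ 2 ∂expWeighted volume (τ • ℓ)) := by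
        rw [mul_add]; exact add_le_add hV hJ
    _ ≤ W * (24 * M ^ 2 * (W * ∫ x in Ω, ‖strain (F x) (jacobianMatrix v x)‖ ^ 2)) := by
        gcongr
        refine (weighted F v hF hvt).trans ?_
        gcongr
    _ = _ := by ring

end Absorption

/-- Generalized Korn inequality of Pompe and Neff (Proposition 3.4 of the
paper), stated for smooth compactly supported test fields: for every
`λ ∈ (0,1)` and `K > 1` there is `C(K) > 0`, uniform over all `λ`-Hölder
matrix fields `F` bounded by `K` with `det F ≥ 1/K` on `cl(Ω)`, such that
`∫_Ω |Fᵀ∇v + (∇v)ᵀF|² ≥ C(K)(∫_Ω |v|² + ∫_Ω |∇v|²)`. -/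
theorem korn_pompe_neff {d : ℕ}
    (Ω : Set (EuclideanSpace ℝ (Fin d))) (hΩo : IsOpen Ω)
    (hΩb : Bornology.IsBounded Ω) (hΩc : IsConnected Ω)
    (lam K : ℝ) (hlam : lam ∈ Set.Ioo (0 : ℝ) 1) (hK : 1 < K) :
    ∃ C > (0 : ℝ), ∀ F : EuclideanSpace ℝ (Fin d) → Matrix (Fin d) (Fin d) ℝ,
      (∀ x ∈ closure Ω, frobNorm (F x) ≤ K) →
      (∀ x ∈ closure Ω, ∀ y ∈ closure Ω, frobNorm (F x - F y) ≤ K * ‖x - y‖ ^ lam) →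
      (∀ x ∈ closure Ω, 1 / K ≤ (F x).det) →
      ∀ v : EuclideanSpace ℝ (Fin d) → EuclideanSpace ℝ (Fin d),
        ContDiff ℝ (⊤ : ℕ∞) v → HasCompactSupport v → tsupport v ⊆ Ω →
        C * ((∫ x in Ω, ‖v x‖ ^ 2) +
            ∫ x in Ω, ∑ i, ∑ j, ((jacobianMatrix v x) i j) ^ 2)
          ≤ ∫ x in Ω, ∑ i, ∑ j,
              (((F x)ᵀ * jacobianMatrix v x + (jacobianMatrix v x)ᵀ * F x) i j) ^ 2 := by
  rcases d.eq_zero_or_pos with rfl | hd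
  · exact ⟨1, one_pos, fun F _ _ _ v _ _ _ ↦ by simp [Subsingleton.elim (v _) 0]⟩
  obtain ⟨ρ, hρ⟩ := hΩb.exists_norm_le
  have hm : Filter.Tendsto (fun t ↦ K * t ^ lam) (𝓝 0) (𝓝 0) :=
    (continuous_const.mul (Real.continuous_rpow_const hlam.1.le)).tendsto' _ _
      (by simp [hlam.1.ne'])
  obtain ⟨C, hC, korn⟩ := korn_pompe_neff_general (ℓ := EuclideanSpace.proj ⟨0, hd⟩)
    (fun h ↦ one_ne_zero (α := ℝ) <| by simpa using congr($h (EuclideanSpace.single ⟨0, hd⟩ 1)))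
    (fun x hx ↦ (PiLp.norm_apply_le x _).trans (hρ x hx)) K (one_div_pos.2 (one_pos.trans hK)) hm
  refine ⟨C, hC, fun F hF hosc hdet v hv hvc hvΩ ↦ ?_⟩
  simp only [frobNorm_eq_norm, ← frobenius_norm_sq] at hF hosc ⊢
  exact korn F (fun x hx ↦ hF x (subset_closure hx))
    (fun x hx y hy ↦ hosc x (subset_closure hx) y (subset_closure hy))
    (fun x hx ↦ (hdet x (subset_closure hx)).trans (le_abs_self _)) v hv hvc hvΩ
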